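/- arXiv:2005.09021 — 5 statements merged into one kernel-verified Lean document; each statement's English description precedes it below -/
import Mathlib

section
/- Let λ̄ = ‖y‖₂ · max_{1≤i≤d} ‖a_i‖₂. If λ > λ̄, then every local minimum x* of the objective F2_λ(x) = (1/2)‖Ax − y‖₂² + λ τ_k(x) is k-sparse. -/
open Finset Filter Topology

/-- Euclidean (ℓ₂) norm of a vector in ℝ^m. -/
noncomputable def l2norm {m : ℕ} (v : Fin m → ℝ) : ℝ := Real.sqrt (∑ i, v i ^ 2)

/-- The trimmed lasso penalty: the minimum, over index sets Λ of size d − k,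
of the ℓ₁ norm of x restricted to Λ. -/
noncomputable def tauTL {d : ℕ} (k : ℕ) (x : Fin d → ℝ) : ℝ :=
  sInf ((fun Λ : Finset (Fin d) => ∑ i ∈ Λ, |x i|) '' {Λ : Finset (Fin d) | Λ.card = d - k})

/-!
Let `Λ` be an index set of size `d - k` attaining the minimum in `τ_k(x*)`. Replacing `τ_k` by the
sum of `|x_i|` over `Λ` majorizes the objective, with equality at `x*`, so `x*` is also a local
minimum of the majorant. The majorant is convex, hence `x*` is a global minimum of it, and comparing
with the value at `0` gives `‖Ax* - y‖ ≤ ‖y‖`. If `x*_j ≠ 0` for some `j ∈ Λ`, the majorant is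
differentiable in the coordinate `j`, and stationarity reads `|⟨Ax* - y, a_j⟩| = λ`, which
Cauchy–Schwarz forbids when `λ > ‖y‖ · max ‖a_i‖`. So `x*` vanishes on `Λ`.
-/

theorem l2norm_eq_norm {m : ℕ} (v : Fin m → ℝ) : l2norm v = ‖WithLp.toLp 2 v‖ := by
  simp only [l2norm, EuclideanSpace.norm_eq, Real.norm_eq_abs, sq_abs]

theorem l2norm_nonneg {m : ℕ} (v : Fin m → ℝ) : 0 ≤ l2norm v := Real.sqrt_nonneg _

theorem l2norm_neg {m : ℕ} (v : Fin m → ℝ) : l2norm (-v) = l2norm v := by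
  simp only [l2norm, Pi.neg_apply, neg_sq]

theorem abs_dotProduct_le_l2norm_mul_l2norm {m : ℕ} (u v : Fin m → ℝ) :
    |u ⬝ᵥ v| ≤ l2norm u * l2norm v := by
  have h := abs_real_inner_le_norm (WithLp.toLp 2 v) (WithLp.toLp 2 u)
  rwa [EuclideanSpace.inner_toLp_toLp, star_trivial, mul_comm, ← l2norm_eq_norm,
    ← l2norm_eq_norm] at h

theorem abs_dotProduct_mulVec_single_one_le {n d : ℕ} (A : Matrix (Fin n) (Fin d) ℝ)
    (u : Fin n → ℝ) (j : Fin d) :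
    |u ⬝ᵥ A.mulVec (Pi.single j 1)| ≤ l2norm u * ⨆ i, l2norm (A.col i) := by
  have hcol : l2norm (A.col j) ≤ ⨆ i, l2norm (A.col i) :=
    le_ciSup (f := fun i => l2norm (A.col i)) (Set.finite_range _).bddAbove j
  rw [Matrix.mulVec_single_one]
  exact (abs_dotProduct_le_l2norm_mul_l2norm u _).trans
    (mul_le_mul_of_nonneg_left hcol (l2norm_nonneg u))

theorem convexOn_l2norm (m : ℕ) : ConvexOn ℝ Set.univ (l2norm : (Fin m → ℝ) → ℝ) := by
  have h := convexOn_univ_norm.comp_linearMap (WithLp.linearEquiv 2 ℝ (Fin m → ℝ)).symm.toLinearMap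
  exact h.congr fun v _ => (l2norm_eq_norm v).symm

/-- The least-squares loss `(1/2)‖Ax - y‖₂²`, the smooth part of the objective. -/
noncomputable def leastSquares {n d : ℕ} (A : Matrix (Fin n) (Fin d) ℝ) (y : Fin n → ℝ)
    (x : Fin d → ℝ) : ℝ :=
  (1 / 2) * (l2norm (A.mulVec x - y)) ^ 2

section LeastSquares

variable {n d : ℕ} (A : Matrix (Fin n) (Fin d) ℝ) (y : Fin n → ℝ)

theorem leastSquares_le_leastSquares_zero_iff {x : Fin d → ℝ} :
    leastSquares A y x ≤ leastSquares A y 0 ↔ l2norm (A.mulVec x - y) ≤ l2norm y := by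
  rw [leastSquares, leastSquares, Matrix.mulVec_zero, zero_sub, l2norm_neg,
    mul_le_mul_iff_right₀ one_half_pos, sq_le_sq₀ (l2norm_nonneg _) (l2norm_nonneg _)]

theorem convexOn_leastSquares : ConvexOn ℝ Set.univ (leastSquares A y) := by
  have hnorm : ConvexOn ℝ Set.univ fun x => l2norm (A.mulVec x - y) :=
    (convexOn_l2norm n).comp_affineMap
      (A.mulVecLin.toAffineMap - AffineMap.const ℝ (Fin d → ℝ) y)
  exact (hnorm.pow (fun _ _ => l2norm_nonneg _) 2).smul one_half_pos.le

theorem hasLineDerivAt_leastSquares (x v : Fin d → ℝ) :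
    HasLineDerivAt ℝ (leastSquares A y) ((A.mulVec x - y) ⬝ᵥ A.mulVec v) x v := by
  set r : EuclideanSpace ℝ (Fin n) := WithLp.toLp 2 (A.mulVec x - y) with hr
  set w : EuclideanSpace ℝ (Fin n) := WithLp.toLp 2 (A.mulVec v) with hw
  have hloss (t : ℝ) : leastSquares A y (x + t • v) = 1 / 2 * ‖r + t • w‖ ^ 2 := by
    rw [leastSquares, l2norm_eq_norm, Matrix.mulVec_add, Matrix.mulVec_smul, add_sub_right_comm,
      WithLp.toLp_add, WithLp.toLp_smul]
  have hline : HasDerivAt (fun t : ℝ => r + t • w) w 0 := by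
    simpa only [one_smul, id_eq] using ((hasDerivAt_id (0 : ℝ)).smul_const w).const_add r
  have hinner : inner ℝ r w = (A.mulVec x - y) ⬝ᵥ A.mulVec v := by
    rw [hr, hw, EuclideanSpace.inner_toLp_toLp, star_trivial, dotProduct_comm]
  have hderiv := hline.norm_sq.const_mul (1 / 2)
  rw [zero_smul, add_zero, hinner, one_div, inv_mul_cancel_left₀ two_ne_zero] at hderiv
  simpa only [HasLineDerivAt, hloss, one_div] using hderiv

end LeastSquares

section TrimmedLasso

variable {d : ℕ}

theorem tauTL_le_sum_abs {k : ℕ} {Λ : Finset (Fin d)} (hΛ : Λ.card = d - k) (x : Fin d → ℝ) :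
    tauTL k x ≤ ∑ i ∈ Λ, |x i| :=
  csInf_le ((Set.toFinite _).image _).bddBelow ⟨Λ, hΛ, rfl⟩

theorem exists_card_eq_sum_abs_eq_tauTL (k : ℕ) (x : Fin d → ℝ) :
    ∃ Λ : Finset (Fin d), Λ.card = d - k ∧ ∑ i ∈ Λ, |x i| = tauTL k x := by
  have hne : {Λ : Finset (Fin d) | Λ.card = d - k}.Nonempty := by
    obtain ⟨Λ, -, hΛ⟩ := exists_subset_card_eq (s := (univ : Finset (Fin d))) (n := d - k) (by simp)
    exact ⟨Λ, hΛ⟩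
  exact (hne.image _).csInf_mem ((Set.toFinite _).image _)

theorem exists_isLocalMin_add_sum_abs_of_isLocalMin_add_tauTL {f : (Fin d → ℝ) → ℝ} {k : ℕ}
    {lam : ℝ} (hlam : 0 ≤ lam) {x : Fin d → ℝ}
    (hmin : IsLocalMin (fun z => f z + lam * tauTL k z) x) :
    ∃ Λ : Finset (Fin d), Λ.card = d - k ∧
      IsLocalMin (fun z => f z + lam * ∑ i ∈ Λ, |z i|) x := by
  obtain ⟨Λ, hΛ, hx⟩ := exists_card_eq_sum_abs_eq_tauTL k x
  refine ⟨Λ, hΛ, ?_⟩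
  filter_upwards [hmin] with z hz
  calc f x + lam * ∑ i ∈ Λ, |x i| = f x + lam * tauTL k x := by rw [hx]
    _ ≤ f z + lam * tauTL k z := hz
    _ ≤ f z + lam * ∑ i ∈ Λ, |z i| := by gcongr; exact tauTL_le_sum_abs hΛ z

end TrimmedLasso

section SumAbs

variable {ι : Type*}

theorem convexOn_sum_abs (s : Finset ι) :
    ConvexOn ℝ Set.univ fun x : ι → ℝ => ∑ i ∈ s, |x i| := by
  classical
  induction s using Finset.induction_on with
  | empty => simpa only [sum_empty] using convexOn_const 0 convex_univ
  | insert i s hi ih =>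
    simp only [sum_insert hi]
    exact (convexOn_univ_norm.comp_linearMap (LinearMap.proj i)).add ih

theorem apply_le_apply_zero_of_isLocalMin_add_sum_abs {f : (ι → ℝ) → ℝ}
    (hf : ConvexOn ℝ Set.univ f) {lam : ℝ} (hlam : 0 ≤ lam) {s : Finset ι} {x : ι → ℝ}
    (hmin : IsLocalMin (fun z => f z + lam * ∑ i ∈ s, |z i|) x) : f x ≤ f 0 := by
  have hglobal := IsMinOn.of_isLocalMin_of_convex_univ hmin
    (hf.add ((convexOn_sum_abs s).smul hlam)) 0
  have hpen : 0 ≤ lam * ∑ i ∈ s, |x i| := by positivity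
  simp only [Pi.zero_apply, abs_zero, sum_const_zero, mul_zero, add_zero] at hglobal
  linarith

theorem hasLineDerivAt_sum_abs_single [DecidableEq ι] {s : Finset ι} {j : ι} (hj : j ∈ s)
    {x : ι → ℝ} (hx : x j ≠ 0) :
    HasLineDerivAt ℝ (fun z : ι → ℝ => ∑ i ∈ s, |z i|) (SignType.sign (x j) : ℝ) x
      (Pi.single j 1) := by
  have hsplit (t : ℝ) : ∑ i ∈ s, |(x + t • Pi.single j (1 : ℝ) : ι → ℝ) i| =
      |x j + t| + ∑ i ∈ s.erase j, |x i| := by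
    rw [← add_sum_erase s _ hj]
    congr 1
    · simp
    · refine sum_congr rfl fun i hi => ?_
      simp [ne_of_mem_erase hi]
  have habs : HasDerivAt (fun t => |x j + t|) (SignType.sign (x j) : ℝ) 0 := by
    refine HasDerivAt.comp_const_add (x j) 0 ?_
    rw [add_zero]
    exact hasDerivAt_abs hx
  simpa only [HasLineDerivAt, hsplit] using habs.add_const (∑ i ∈ s.erase j, |x i|)

theorem apply_eq_zero_of_isLocalMin_add_sum_abs [DecidableEq ι] {f : (ι → ℝ) → ℝ} {lam f' : ℝ}
    {s : Finset ι} {x : ι → ℝ} (hmin : IsLocalMin (fun z => f z + lam * ∑ i ∈ s, |z i|) x)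
    {j : ι} (hj : j ∈ s) (hf : HasLineDerivAt ℝ f f' x (Pi.single j 1)) (hlam : |f'| < lam) :
    x j = 0 := by
  by_contra hxj
  have hstat : f' + lam * (SignType.sign (x j) : ℝ) = 0 := hmin.hasLineDerivAt_eq_zero
    (HasDerivAt.fun_add hf (HasDerivAt.const_mul lam (hasLineDerivAt_sum_abs_single hj hxj)))
  have hpair : -(f' * x j) = lam * |x j| := by
    rw [← sign_mul_self (x j)]
    linear_combination -(x j) * hstat
  have hlt : |f'| * |x j| < lam * |x j| := mul_lt_mul_of_pos_right hlam (abs_pos.2 hxj)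
  rw [← abs_mul, ← hpair] at hlt
  exact hlt.not_ge (neg_le_abs _)

theorem ncard_ne_zero_le_card_sub_card [Fintype ι] {s : Finset ι} {x : ι → ℝ}
    (hx : ∀ i ∈ s, x i = 0) : Set.ncard {i | x i ≠ 0} ≤ Fintype.card ι - s.card := by
  classical
  rw [← card_compl, ← Set.ncard_coe_finset]
  refine Set.ncard_le_ncard fun i hi => ?_
  simpa using fun h => hi (hx i h)

end SumAbs

/-- If λ > λ̄ = ‖y‖₂ · maxᵢ ‖aᵢ‖₂, then every local minimum of
F2_λ(x) = (1/2)‖Ax − y‖₂² + λ τ_k(x) is k-sparse. -/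
theorem stmt0 {n d : ℕ} (k : ℕ) (hk : 0 < k) (hkd : k < d)
    (A : Matrix (Fin n) (Fin d) ℝ) (y : Fin n → ℝ) (lam : ℝ)
    (hlam : l2norm y * (⨆ i : Fin d, l2norm (fun j => A j i)) < lam)
    (xstar : Fin d → ℝ)
    (hmin : IsLocalMin
      (fun x : Fin d → ℝ =>
        (1 / 2) * (l2norm (A.mulVec x - y)) ^ 2 + lam * tauTL k x) xstar) :
    Set.ncard {i : Fin d | xstar i ≠ 0} ≤ k := by
  have hlam_nonneg : 0 ≤ lam :=
    (mul_nonneg (l2norm_nonneg y) (Real.iSup_nonneg fun _ => l2norm_nonneg _)).trans hlam.le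
  obtain ⟨Λ, hΛ, hminΛ⟩ := exists_isLocalMin_add_sum_abs_of_isLocalMin_add_tauTL
    (f := leastSquares A y) hlam_nonneg hmin
  have hres : l2norm (A.mulVec xstar - y) ≤ l2norm y :=
    (leastSquares_le_leastSquares_zero_iff A y).1
      (apply_le_apply_zero_of_isLocalMin_add_sum_abs (convexOn_leastSquares A y) hlam_nonneg hminΛ)
  have hzero : ∀ j ∈ Λ, xstar j = 0 := by
    intro j hj
    refine apply_eq_zero_of_isLocalMin_add_sum_abs hminΛ hj (hasLineDerivAt_leastSquares A y _ _) ?_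
    calc |(A.mulVec xstar - y) ⬝ᵥ A.mulVec (Pi.single j 1)|
        ≤ l2norm (A.mulVec xstar - y) * ⨆ i, l2norm (A.col i) :=
          abs_dotProduct_mulVec_single_one_le A _ j
      _ ≤ l2norm y * ⨆ i, l2norm (A.col i) :=
          mul_le_mul_of_nonneg_right hres (Real.iSup_nonneg fun _ => l2norm_nonneg _)
      _ < lam := hlam
  calc Set.ncard {i | xstar i ≠ 0} ≤ Fintype.card (Fin d) - Λ.card :=
        ncard_ne_zero_le_card_sub_card hzero
    _ = k := by rw [Fintype.card_fin, hΛ, Nat.sub_sub_self hkd.le]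
end

section
/- For every x ∈ ℝ^d, the function γ ↦ τ_{k,γ}(x) is monotone decreasing on (0,∞); its limit as γ → 0 equals ((d−k)/d)‖x‖₁ and its limit as γ → ∞ equals τ_k(x). Moreover, for every x ∈ ℝ^d and every γ ∈ (0,∞), τ_k(x) ≤ τ_{k,γ}(x) ≤ τ_k(x) + (1/γ) log C(d,k), so the convergence τ_{k,γ} → τ_k as γ → ∞ is uniform over x ∈ ℝ^d. -/
open Finset Filter Topology

/-- The generalized soft-min penalty τ_{k,γ}; at γ = 0 it equals
((d−k)/d)‖x‖₁. -/
noncomputable def tauGSM {d : ℕ} (k : ℕ) (γ : ℝ) (x : Fin d → ℝ) : ℝ :=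
  if γ = 0 then (((d : ℝ) - (k : ℝ)) / (d : ℝ)) * ∑ i, |x i|
  else -(1 / γ) * Real.log ((1 / (d.choose (d - k) : ℝ)) *
    ∑ Λ ∈ Finset.univ.powersetCard (d - k), Real.exp (-γ * ∑ i ∈ Λ, |x i|))

/-!
With `K t = log ∑ wᵢ exp (t aᵢ)` the cumulant generating function and `t = -γ`, the soft minimum
`-γ⁻¹ log ∑ wᵢ exp (-γ aᵢ)` is the slope `K t / t`, so its limit at `γ = 0` is `K' 0`, the mean
`∑ wᵢ aᵢ`. Also, `exp (-softMin γ)` is the power mean of order `γ` of the numbers `exp (-aᵢ)`, and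
power means increase with their order. A weighted mean lies below its largest value and a sum of
nonnegative terms above each of them, which compares the soft minimum with the minimum. For the
trimmed lasso, `aᵢ` runs over the sums of `|x|` over the `(d - k)`-subsets, whose mean is found by
double counting: each index lies in the same number of subsets.
-/

section SoftMin

variable {ι : Type*} {s : Finset ι} {w a : ι → ℝ} {γ : ℝ}

/-- The soft minimum with parameter `γ` of the values `a i`, weighted by `w i`, for `i ∈ s`. It
interpolates between the weighted mean (`γ → 0`) and the minimum (`γ → ∞`). Normalization of the
weights is left to the lemmas. -/
noncomputable def softMin (s : Finset ι) (w a : ι → ℝ) (γ : ℝ) : ℝ :=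
  -(1 / γ) * Real.log (∑ i ∈ s, w i * Real.exp (-γ * a i))

lemma sum_mul_exp_pos (hw : ∀ i ∈ s, 0 ≤ w i) (hsum : 0 < ∑ i ∈ s, w i) (b : ι → ℝ) :
    0 < ∑ i ∈ s, w i * Real.exp (b i) := by
  obtain ⟨i, hi, hwi⟩ : ∃ i ∈ s, 0 < w i := by
    simpa using exists_lt_of_sum_lt (s := s) (f := fun _ => (0 : ℝ)) (by simpa using hsum)
  exact sum_pos' (fun j hj => mul_nonneg (hw j hj) (Real.exp_pos _).le)
    ⟨i, hi, mul_pos hwi (Real.exp_pos _)⟩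

lemma exp_neg_mul_softMin (hw : ∀ i ∈ s, 0 ≤ w i) (hsum : 0 < ∑ i ∈ s, w i) (hγ : γ ≠ 0) :
    Real.exp (-γ * softMin s w a γ) = ∑ i ∈ s, w i * Real.exp (-γ * a i) := by
  have hcancel (L : ℝ) : -γ * (-(1 / γ) * L) = L := by field_simp
  rw [softMin, hcancel, Real.exp_log (sum_mul_exp_pos hw hsum _)]

lemma le_softMin_iff (hw : ∀ i ∈ s, 0 ≤ w i) (hsum : 0 < ∑ i ∈ s, w i) (hγ : 0 < γ) {m : ℝ} :
    m ≤ softMin s w a γ ↔ ∑ i ∈ s, w i * Real.exp (-γ * a i) ≤ Real.exp (-γ * m) := by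
  rw [← exp_neg_mul_softMin hw hsum hγ.ne', Real.exp_le_exp,
    mul_le_mul_left_of_neg (neg_neg_of_pos hγ)]

lemma softMin_le_iff (hw : ∀ i ∈ s, 0 ≤ w i) (hsum : 0 < ∑ i ∈ s, w i) (hγ : 0 < γ) {m : ℝ} :
    softMin s w a γ ≤ m ↔ Real.exp (-γ * m) ≤ ∑ i ∈ s, w i * Real.exp (-γ * a i) := by
  rw [← exp_neg_mul_softMin hw hsum hγ.ne', Real.exp_le_exp,
    mul_le_mul_left_of_neg (neg_neg_of_pos hγ)]

lemma softMin_antitoneOn (hw : ∀ i ∈ s, 0 ≤ w i) (hsum : ∑ i ∈ s, w i = 1) :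
    AntitoneOn (softMin s w a) (Set.Ioi 0) := by
  intro p (hp : 0 < p) q (hq : 0 < q) hpq
  have hsum_pos : 0 < ∑ i ∈ s, w i := hsum ▸ one_pos
  have exp_rpow (b : ℝ) : Real.exp (-p * b) ^ (q / p) = Real.exp (-q * b) := by
    rw [← Real.exp_mul]
    congr 1
    field_simp
  rw [softMin_le_iff hw hsum_pos hq]
  calc Real.exp (-q * softMin s w a p)
      = (∑ i ∈ s, w i * Real.exp (-p * a i)) ^ (q / p) := by
        rw [← exp_rpow, exp_neg_mul_softMin hw hsum_pos hp.ne']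
    _ ≤ ∑ i ∈ s, w i * Real.exp (-p * a i) ^ (q / p) :=
        Real.rpow_arith_mean_le_arith_mean_rpow s w _ hw hsum (fun _ _ => (Real.exp_pos _).le)
          ((one_le_div hp).2 hpq)
    _ = ∑ i ∈ s, w i * Real.exp (-q * a i) := by simp only [exp_rpow]

lemma hasDerivAt_log_sum_mul_exp_zero (a : ι → ℝ) (hsum : ∑ i ∈ s, w i = 1) :
    HasDerivAt (fun γ => Real.log (∑ i ∈ s, w i * Real.exp (-γ * a i)))
      (-∑ i ∈ s, w i * a i) 0 := by
  have hterm (i : ι) :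
      HasDerivAt (fun γ => w i * Real.exp (-γ * a i)) (w i * -a i) 0 := by
    simpa using (((hasDerivAt_id (0 : ℝ)).neg.mul_const (a i)).exp).const_mul (w i)
  have hderiv := HasDerivAt.fun_sum fun i (_ : i ∈ s) => hterm i
  simpa [hsum] using hderiv.log (by simp [hsum])

lemma tendsto_softMin_zero (a : ι → ℝ) (hsum : ∑ i ∈ s, w i = 1) :
    Tendsto (softMin s w a) (𝓝[>] 0) (𝓝 (∑ i ∈ s, w i * a i)) := by
  have hslope := (hasDerivAt_log_sum_mul_exp_zero a hsum).tendsto_slope_zero_right.neg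
  rw [neg_neg] at hslope
  exact hslope.congr fun γ => by simp [softMin, hsum]

lemma le_softMin (hw : ∀ i ∈ s, 0 ≤ w i) (hsum : ∑ i ∈ s, w i = 1) (hγ : 0 < γ) {m : ℝ}
    (hm : ∀ i ∈ s, m ≤ a i) : m ≤ softMin s w a γ := by
  rw [le_softMin_iff hw (hsum ▸ one_pos) hγ]
  calc ∑ i ∈ s, w i * Real.exp (-γ * a i)
      ≤ ∑ i ∈ s, w i * Real.exp (-γ * m) := by
        refine sum_le_sum fun i hi => mul_le_mul_of_nonneg_left (Real.exp_le_exp.2 ?_) (hw i hi)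
        exact mul_le_mul_of_nonpos_left (hm i hi) (neg_nonpos.2 hγ.le)
    _ = Real.exp (-γ * m) := by rw [← sum_mul, hsum, one_mul]

lemma softMin_le_sub_log (hw : ∀ i ∈ s, 0 ≤ w i) (hγ : 0 < γ) {i : ι} (hi : i ∈ s)
    (hwi : 0 < w i) : softMin s w a γ ≤ a i - 1 / γ * Real.log (w i) := by
  rw [softMin_le_iff hw (sum_pos' hw ⟨i, hi, hwi⟩) hγ]
  have hexponent : -γ * (a i - 1 / γ * Real.log (w i)) = Real.log (w i) + -γ * a i := by
    field_simp
    ring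
  rw [hexponent, Real.exp_add, Real.exp_log hwi]
  exact single_le_sum (f := fun j => w j * Real.exp (-γ * a j))
    (fun j hj => mul_nonneg (hw j hj) (Real.exp_pos _).le) hi

end SoftMin

section PowersetCard

variable {α : Type*}

lemma sum_powersetCard_succ_sum {M : Type*} [AddCommMonoid M] (s : Finset α) (n : ℕ) (f : α → M) :
    ∑ t ∈ s.powersetCard (n + 1), ∑ i ∈ t, f i = (#s - 1).choose n • ∑ i ∈ s, f i := by
  classical
  calc ∑ t ∈ s.powersetCard (n + 1), ∑ i ∈ t, f i
      = ∑ i ∈ s, ∑ t ∈ s.powersetCard (n + 1) with {i} ⊆ t, f i := by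
        refine sum_comm' fun t i => ?_
        simp only [mem_powersetCard, mem_filter, singleton_subset_iff]
        exact ⟨fun h => ⟨h, h.1.1 h.2⟩, fun h => h.1⟩
    _ = ∑ i ∈ s, (#s - 1).choose n • f i := by
        refine sum_congr rfl fun i hi => ?_
        rw [sum_const, card_filter_powersetCard_subset _ _ _ (singleton_subset_iff.2 hi) (by simp),
          card_singleton, Nat.add_sub_cancel]
    _ = (#s - 1).choose n • ∑ i ∈ s, f i := (smul_sum ..).symm

lemma sum_powersetCard_sum_div_choose {K : Type*} [Field K] [CharZero K] {s : Finset α} {n : ℕ}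
    (hn : n ≤ #s) (f : α → K) :
    (∑ t ∈ s.powersetCard n, ∑ i ∈ t, f i) / (#s).choose n = n / #s * ∑ i ∈ s, f i := by
  cases n with
  | zero => simp
  | succ m =>
    obtain ⟨c, hc⟩ : ∃ c, #s = c + 1 := Nat.exists_eq_add_one.2 (by lia)
    have hchoose : ((c + 1).choose (m + 1) : K) ≠ 0 := by
      exact_mod_cast (Nat.choose_pos (hc ▸ hn)).ne'
    have habsorb : ((c : K) + 1) * c.choose m = (c + 1).choose (m + 1) * (m + 1) := by
      exact_mod_cast Nat.add_one_mul_choose_eq c m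
    have hc₀ : (c : K) + 1 ≠ 0 := Nat.cast_add_one_ne_zero c
    rw [sum_powersetCard_succ_sum, hc, Nat.add_sub_cancel, nsmul_eq_mul]
    push_cast
    field_simp
    linear_combination (∑ i ∈ s, f i) * habsorb

end PowersetCard

section TrimmedLasso

variable {d k : ℕ} {γ : ℝ}

lemma tauTL_le_sum (x : Fin d → ℝ) {Λ : Finset (Fin d)} (hΛ : #Λ = d - k) :
    tauTL k x ≤ ∑ i ∈ Λ, |x i| :=
  csInf_le ((Set.toFinite _).image _).bddBelow ⟨Λ, hΛ, rfl⟩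

lemma exists_sum_eq_tauTL (k : ℕ) (x : Fin d → ℝ) :
    ∃ Λ : Finset (Fin d), #Λ = d - k ∧ ∑ i ∈ Λ, |x i| = tauTL k x := by
  obtain ⟨Λ, hΛ⟩ : ∃ Λ : Finset (Fin d), #Λ = d - k :=
    (exists_subset_card_eq (s := univ) (by simp)).imp fun _ h => h.2
  exact Set.Nonempty.csInf_mem (Set.Nonempty.image _ ⟨Λ, hΛ⟩) ((Set.toFinite _).image _)

lemma tauGSM_eq_softMin (k : ℕ) (x : Fin d → ℝ) (hγ : γ ≠ 0) :
    tauGSM k γ x = softMin (univ.powersetCard (d - k)) (fun _ => 1 / (d.choose (d - k) : ℝ))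
      (fun Λ => ∑ i ∈ Λ, |x i|) γ := by
  rw [tauGSM, if_neg hγ, softMin, mul_sum]

lemma sum_powersetCard_one_div_choose (d k : ℕ) :
    ∑ _Λ ∈ (univ : Finset (Fin d)).powersetCard (d - k), 1 / (d.choose (d - k) : ℝ) = 1 := by
  have hchoose : (d.choose (d - k) : ℝ) ≠ 0 := by
    exact_mod_cast (Nat.choose_pos (Nat.sub_le d k)).ne'
  simp [hchoose]

lemma tauGSM_antitoneOn (k : ℕ) (x : Fin d → ℝ) :
    AntitoneOn (fun γ => tauGSM k γ x) (Set.Ioi 0) :=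
  (softMin_antitoneOn (fun _ _ => by positivity) (sum_powersetCard_one_div_choose d k)).congr
    fun _ hγ => (tauGSM_eq_softMin k x (ne_of_gt hγ)).symm

lemma tendsto_tauGSM_zero (hkd : k ≤ d) (x : Fin d → ℝ) :
    Tendsto (fun γ => tauGSM k γ x) (𝓝[>] 0) (𝓝 (((d : ℝ) - k) / d * ∑ i, |x i|)) := by
  have hmean : ∑ Λ ∈ univ.powersetCard (d - k), 1 / (d.choose (d - k) : ℝ) * ∑ i ∈ Λ, |x i| =
      ((d : ℝ) - k) / d * ∑ i, |x i| := by
    have h := sum_powersetCard_sum_div_choose (s := univ) (n := d - k) (by simp) fun i => |x i|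
    rwa [card_fin, Nat.cast_sub hkd, div_eq_inv_mul, inv_eq_one_div, mul_sum] at h
  rw [← hmean]
  exact tendsto_nhdsWithin_congr (fun _ hγ => (tauGSM_eq_softMin k x (ne_of_gt hγ)).symm)
    (tendsto_softMin_zero _ (sum_powersetCard_one_div_choose d k))

lemma tauTL_le_tauGSM (k : ℕ) (x : Fin d → ℝ) (hγ : 0 < γ) : tauTL k x ≤ tauGSM k γ x := by
  rw [tauGSM_eq_softMin k x hγ.ne']
  exact le_softMin (fun _ _ => by positivity) (sum_powersetCard_one_div_choose d k) hγ
    fun Λ hΛ => tauTL_le_sum x (mem_powersetCard_univ.1 hΛ)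

lemma tauGSM_le_tauTL_add (hkd : k ≤ d) (x : Fin d → ℝ) (hγ : 0 < γ) :
    tauGSM k γ x ≤ tauTL k x + 1 / γ * Real.log (d.choose k) := by
  obtain ⟨Λ, hΛ, hmin⟩ := exists_sum_eq_tauTL k x
  have hchoose : (0 : ℝ) < d.choose k := by exact_mod_cast Nat.choose_pos hkd
  have hle := softMin_le_sub_log (w := fun _ => 1 / (d.choose k : ℝ))
    (a := fun Λ : Finset (Fin d) => ∑ i ∈ Λ, |x i|) (fun _ _ => by positivity) hγ
    (mem_powersetCard_univ.2 hΛ) (by positivity)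
  rw [tauGSM_eq_softMin k x hγ.ne', Nat.choose_symm hkd]
  simpa only [hmin, one_div, Real.log_inv, mul_neg, sub_neg_eq_add] using hle

lemma tendstoUniformly_tauGSM_atTop (hkd : k ≤ d) :
    TendstoUniformly (fun γ (x : Fin d → ℝ) => tauGSM k γ x) (tauTL k) atTop := by
  have hgap : Tendsto (fun γ : ℝ => 1 / γ * Real.log (d.choose k)) atTop (𝓝 0) := by
    simpa using tendsto_inv_atTop_zero.mul_const (Real.log (d.choose k))
  refine Metric.tendstoUniformly_iff.2 fun ε hε => ?_
  filter_upwards [eventually_gt_atTop 0, hgap.eventually_lt_const hε] with γ hγ hlt x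
  rw [dist_comm, Real.dist_eq, abs_of_nonneg (sub_nonneg.2 (tauTL_le_tauGSM k x hγ))]
  linarith [tauGSM_le_tauTL_add hkd x hγ]

end TrimmedLasso

/-- τ_{k,γ}(x) is monotone decreasing in γ on (0,∞); it tends to
((d−k)/d)‖x‖₁ as γ → 0⁺ and to τ_k(x) as γ → ∞; moreover for all γ > 0,
τ_k(x) ≤ τ_{k,γ}(x) ≤ τ_k(x) + (1/γ) log C(d,k), so that the convergence as
γ → ∞ is uniform in x. -/
theorem stmt7 {d : ℕ} (k : ℕ) (hk : 0 < k) (hkd : k < d) (x : Fin d → ℝ) :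
    AntitoneOn (fun γ : ℝ => tauGSM k γ x) (Set.Ioi (0 : ℝ)) ∧
    Tendsto (fun γ : ℝ => tauGSM k γ x) (nhdsWithin 0 (Set.Ioi 0))
      (nhds ((((d : ℝ) - (k : ℝ)) / (d : ℝ)) * ∑ i, |x i|)) ∧
    Tendsto (fun γ : ℝ => tauGSM k γ x) atTop (nhds (tauTL k x)) ∧
    ∀ γ : ℝ, 0 < γ →
      tauTL k x ≤ tauGSM k γ x ∧
      tauGSM k γ x ≤ tauTL k x + (1 / γ) * Real.log (d.choose k : ℝ) := by
  exact ⟨tauGSM_antitoneOn k x, tendsto_tauGSM_zero hkd.le x,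
    (tendstoUniformly_tauGSM_atTop hkd.le).tendsto_at x,
    fun _ hγ => ⟨tauTL_le_tauGSM k x hγ, tauGSM_le_tauTL_add hkd.le x hγ⟩⟩
end

section
/- Let x ∈ ℝ^d and set Λ_a = {i : |x_i| < |x|_(k)} and Λ_b = {i : |x_i| = |x|_(k)}. Then for every i ∈ {1,…,d}, lim_{γ→∞} w_{k,γ}^i(x) equals 1 if i ∈ Λ_a, equals (d − k − |Λ_a|)/|Λ_b| if i ∈ Λ_b, and equals 0 otherwise. In particular, if |x|_(k) > |x|_(k+1), then w_{k,γ}(x) converges as γ → ∞ to the 0/1 vector that is 0 exactly on the (uniquely determined) index set of the k largest-magnitude entries of x and 1 elsewhere. -/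
open Finset Filter Topology

/-- The q-th largest entry (1-indexed) of a vector z ∈ ℝ^d. -/
noncomputable def kthLargest {d : ℕ} (z : Fin d → ℝ) (q : ℕ) : ℝ :=
  ((Finset.univ.val.map z).sort (· ≤ ·)).getD (d - q) 0

/-- The GSM weight vector w_{k,γ}(x). -/
noncomputable def wGSM {d : ℕ} (k : ℕ) (γ : ℝ) (x : Fin d → ℝ) (i : Fin d) : ℝ :=
  (∑ Λ ∈ (Finset.univ.powersetCard (d - k)).filter (fun Λ => i ∈ Λ),
      Real.exp (-γ * ∑ j ∈ Λ, |x j|)) /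
  (∑ Λ ∈ Finset.univ.powersetCard (d - k), Real.exp (-γ * ∑ j ∈ Λ, |x j|))

/-!
The weight `wGSM k γ x i` is the probability that `i` belongs to a random `(d - k)`-subset `Λ`,
drawn from the Gibbs measure at inverse temperature `γ` with energy `∑ j ∈ Λ, |x j|`. As `γ → ∞`,
every subset that does not minimize the energy loses its mass. A subset containing `i` but missing
some `j` with `|x j| < |x i|` is improved by exchanging `i` for `j`, and similarly for a subset that
misses `i`; hence the limit is `0` if at least `d - k` entries are strictly below `|x i|`, and `1`
if at most `d - k` entries are at most `|x i|`. The remaining indices all have the same magnitude,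
so they have equal probabilities by symmetry, and these are determined by the sum of all
probabilities, `d - k`.
-/

section GibbsMeasure

variable {α β : Type*}

/-- The probability of the event `p` under the Gibbs measure on the finite set `S` with energy `E`
at inverse temperature `γ`. If `S` is empty, the quotient `0 / 0` makes it `0`. -/
noncomputable def gibbsProb (S : Finset α) (E : α → ℝ) (γ : ℝ) (p : α → Prop) [DecidablePred p] :
    ℝ :=
  (∑ a ∈ S with p a, Real.exp (-γ * E a)) / ∑ a ∈ S, Real.exp (-γ * E a)

theorem sum_exp_neg_mul_pos {S : Finset α} (hS : S.Nonempty) (E : α → ℝ) (γ : ℝ) :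
    0 < ∑ a ∈ S, Real.exp (-γ * E a) :=
  sum_pos (fun _ _ => Real.exp_pos _) hS

theorem exp_div_sum_exp_le {S : Finset α} {b : α} (hb : b ∈ S) (E : α → ℝ) (γ ε : ℝ) :
    Real.exp (-γ * ε) / ∑ c ∈ S, Real.exp (-γ * E c) ≤ Real.exp (-(γ * (ε - E b))) :=
  calc Real.exp (-γ * ε) / ∑ c ∈ S, Real.exp (-γ * E c)
      ≤ Real.exp (-γ * ε) / Real.exp (-γ * E b) := by
        gcongr
        exact single_le_sum (f := fun c => Real.exp (-γ * E c))
          (fun _ _ => (Real.exp_pos _).le) hb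
    _ = Real.exp (-(γ * (ε - E b))) := by rw [← Real.exp_sub]; ring_nf

theorem tendsto_exp_div_sum_exp_zero {S : Finset α} {E : α → ℝ} {ε : ℝ}
    (h : ∃ b ∈ S, E b < ε) :
    Tendsto (fun γ : ℝ => Real.exp (-γ * ε) / ∑ c ∈ S, Real.exp (-γ * E c)) atTop (𝓝 0) := by
  obtain ⟨b, hb, hlt⟩ := h
  refine squeeze_zero (fun γ => ?_) (fun γ => exp_div_sum_exp_le hb E γ ε) ?_
  · exact div_nonneg (Real.exp_pos _).le (sum_exp_neg_mul_pos ⟨b, hb⟩ E γ).le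
  · exact Real.tendsto_exp_neg_atTop_nhds_zero.comp (tendsto_id.atTop_mul_const (sub_pos.2 hlt))

theorem tendsto_gibbsProb_zero {S : Finset α} {E : α → ℝ} {p : α → Prop} [DecidablePred p]
    (h : ∀ a ∈ S, p a → ∃ b ∈ S, E b < E a) :
    Tendsto (fun γ => gibbsProb S E γ p) atTop (𝓝 0) := by
  simp_rw [gibbsProb, sum_div]
  rw [← sum_const_zero (s := S.filter p)]
  refine tendsto_finsetSum _ fun a ha => tendsto_exp_div_sum_exp_zero ?_
  exact h a (mem_filter.1 ha).1 (mem_filter.1 ha).2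

theorem gibbsProb_add_gibbsProb_not {S : Finset α} (hS : S.Nonempty) (E : α → ℝ) (γ : ℝ)
    (p : α → Prop) [DecidablePred p] :
    gibbsProb S E γ p + gibbsProb S E γ (fun a => ¬p a) = 1 := by
  rw [gibbsProb, gibbsProb, ← add_div, sum_filter_add_sum_filter_not,
    div_self (sum_exp_neg_mul_pos hS E γ).ne']

theorem tendsto_gibbsProb_one {S : Finset α} (hS : S.Nonempty) {E : α → ℝ} {p : α → Prop}
    [DecidablePred p] (h : ∀ a ∈ S, ¬p a → ∃ b ∈ S, E b < E a) :
    Tendsto (fun γ => gibbsProb S E γ p) atTop (𝓝 1) := by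
  simp_rw [fun γ => eq_sub_of_add_eq (gibbsProb_add_gibbsProb_not hS E γ p)]
  simpa only [sub_zero] using (tendsto_gibbsProb_zero h).const_sub 1

theorem gibbsProb_congr_equiv {S : Finset α} {T : Finset β} {E : α → ℝ} {F : β → ℝ}
    {p : α → Prop} {q : β → Prop} [DecidablePred p] [DecidablePred q] (e : α ≃ β)
    (hS : ∀ a, a ∈ S ↔ e a ∈ T) (hE : ∀ a, E a = F (e a)) (hp : ∀ a, p a ↔ q (e a)) (γ : ℝ) :
    gibbsProb S E γ p = gibbsProb T F γ q := by
  unfold gibbsProb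
  congr 1
  · exact sum_equiv e (fun a => by simp only [mem_filter, hS, hp]) fun a _ => by rw [hE]
  · exact sum_equiv e hS fun a _ => by rw [hE]

theorem sum_gibbsProb_mem [Fintype α] [DecidableEq α] {S : Finset (Finset α)} (hS : S.Nonempty)
    {n : ℕ} (hn : ∀ s ∈ S, #s = n) (E : Finset α → ℝ) (γ : ℝ) :
    ∑ i, gibbsProb S E γ (i ∈ ·) = n := by
  unfold gibbsProb
  rw [← sum_div, div_eq_iff (sum_exp_neg_mul_pos hS E γ).ne', mul_sum]
  calc ∑ i, ∑ s ∈ S with i ∈ s, Real.exp (-γ * E s)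
      = ∑ s ∈ S, ∑ _ ∈ s, Real.exp (-γ * E s) :=
        sum_comm' fun i s => by simp only [mem_filter, mem_univ, true_and, and_comm]
    _ = ∑ s ∈ S, n * Real.exp (-γ * E s) :=
        sum_congr rfl fun s hs => by rw [sum_const, hn s hs, nsmul_eq_mul]

end GibbsMeasure

section InclusionProbability

variable {ι : Type*}

theorem exists_mem_powersetCard_sum_lt {M : Type*} [AddCommMonoid M] [PartialOrder M]
    [IsOrderedCancelAddMonoid M] {u s : Finset ι} {n : ℕ} {z : ι → M} {i j : ι}
    (hs : s ∈ u.powersetCard n) (hi : i ∈ s) (hj : j ∈ u) (hjs : j ∉ s) (hlt : z j < z i) :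
    ∃ t ∈ u.powersetCard n, ∑ a ∈ t, z a < ∑ a ∈ s, z a := by
  classical
  obtain ⟨hsu, hcard⟩ := mem_powersetCard.1 hs
  have hj' : j ∉ s.erase i := fun h => hjs (mem_of_mem_erase h)
  refine ⟨insert j (s.erase i), mem_powersetCard.2 ⟨?_, ?_⟩, ?_⟩
  · exact insert_subset hj ((erase_subset i s).trans hsu)
  · rw [card_insert_of_notMem hj', card_erase_add_one hi, hcard]
  · rw [sum_insert hj', ← add_sum_erase s z hi]
    gcongr

variable [Fintype ι] [DecidableEq ι] {n : ℕ} {z : ι → ℝ} {i : ι}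

/-- The probability that `i` belongs to a random `n`-subset `s` of `ι`, drawn from the Gibbs
measure with energy `∑ j ∈ s, z j`; this is the weight `wGSM` for a general vector `z` in place
of the magnitudes of the entries. -/
noncomputable def inclusionProb (n : ℕ) (z : ι → ℝ) (γ : ℝ) (i : ι) : ℝ :=
  gibbsProb (univ.powersetCard n) (fun s => ∑ j ∈ s, z j) γ (i ∈ ·)

theorem tendsto_inclusionProb_zero (h : n ≤ #{j | z j < z i}) :
    Tendsto (fun γ => inclusionProb n z γ i) atTop (𝓝 0) := by
  refine tendsto_gibbsProb_zero fun s hs his => ?_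
  have hcard : #(s.erase i) < #{j | z j < z i} :=
    (card_erase_lt_of_mem his).trans_le ((mem_powersetCard.1 hs).2.trans_le h)
  obtain ⟨j, hj, hjs⟩ := exists_mem_notMem_of_card_lt_card hcard
  have hlt : z j < z i := (mem_filter.1 hj).2
  have hji : j ≠ i := ne_of_apply_ne z hlt.ne
  exact exists_mem_powersetCard_sum_lt hs his (mem_univ j)
    (fun hmem => hjs (mem_erase.2 ⟨hji, hmem⟩)) hlt

theorem tendsto_inclusionProb_one (hn : n ≤ Fintype.card ι) (h : #{j | z j ≤ z i} ≤ n) :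
    Tendsto (fun γ => inclusionProb n z γ i) atTop (𝓝 1) := by
  refine tendsto_gibbsProb_one (powersetCard_nonempty.2 hn) fun s hs his => ?_
  have hcard : #(({j | z j ≤ z i} : Finset ι).erase i) < #s :=
    (card_erase_lt_of_mem (by simp)).trans_le (h.trans_eq (mem_powersetCard.1 hs).2.symm)
  obtain ⟨j, hjs, hj⟩ := exists_mem_notMem_of_card_lt_card hcard
  have hji : j ≠ i := ne_of_mem_of_not_mem hjs his
  have hlt : z i < z j := by simpa [hji] using hj
  exact exists_mem_powersetCard_sum_lt hs hjs (mem_univ i) his hlt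

theorem inclusionProb_eq_of_eq (n : ℕ) (γ : ℝ) {j : ι} (hij : z i = z j) :
    inclusionProb n z γ i = inclusionProb n z γ j := by
  have hz : ∀ a, z (Equiv.swap i j a) = z a := Equiv.apply_swap_eq_self hij
  refine gibbsProb_congr_equiv (Equiv.swap i j).finsetCongr (fun s => ?_) (fun s => ?_)
    (fun s => ?_) γ
  · simp [mem_powersetCard]
  · simp [hz]
  · simp [mem_map_equiv]

theorem sum_inclusionProb (hn : n ≤ Fintype.card ι) (z : ι → ℝ) (γ : ℝ) :
    ∑ i, inclusionProb n z γ i = n :=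
  sum_gibbsProb_mem (powersetCard_nonempty.2 hn) (fun _ hs => (mem_powersetCard.1 hs).2) _ γ

theorem inclusionProb_mul_card_eq (hn : n ≤ Fintype.card ι) (z : ι → ℝ) (γ : ℝ) (i : ι) :
    inclusionProb n z γ i * #{j | z j = z i} =
      n - ∑ j with z j ≠ z i, inclusionProb n z γ j := by
  have hconst : ∑ j with z j = z i, inclusionProb n z γ j =
      inclusionProb n z γ i * #{j | z j = z i} := by
    rw [sum_congr rfl fun j hj => inclusionProb_eq_of_eq n γ (mem_filter.1 hj).2, sum_const,
      nsmul_eq_mul, mul_comm]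
  rw [← hconst, eq_sub_iff_add_eq, sum_filter_add_sum_filter_not, sum_inclusionProb hn]

theorem tendsto_inclusionProb_of_ne {j : ι} (hlt : #{l | z l < z i} ≤ n)
    (hle : n ≤ #{l | z l ≤ z i}) (hj : z j ≠ z i) :
    Tendsto (fun γ => inclusionProb n z γ j) atTop (𝓝 (if z j < z i then 1 else 0)) := by
  split_ifs with hji
  · refine tendsto_inclusionProb_one (hle.trans (card_le_univ _)) (le_trans ?_ hlt)
    exact card_le_card (monotone_filter_right _ fun l _ hl => hl.trans_lt hji)
  · have hij : z i < z j := lt_of_le_of_ne (not_lt.1 hji) hj.symm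
    refine tendsto_inclusionProb_zero (hle.trans ?_)
    exact card_le_card (monotone_filter_right _ fun l _ hl => hl.trans_lt hij)

theorem tendsto_inclusionProb_of_card_le (hlt : #{j | z j < z i} ≤ n)
    (hle : n ≤ #{j | z j ≤ z i}) :
    Tendsto (fun γ => inclusionProb n z γ i) atTop
      (𝓝 ((n - #{j | z j < z i}) / #{j | z j = z i})) := by
  have hpos : (#{j | z j = z i} : ℝ) ≠ 0 :=
    Nat.cast_ne_zero.2 (card_ne_zero_of_mem (a := i) (by simp))
  have hcount : ∑ j with z j ≠ z i, (if z j < z i then (1 : ℝ) else 0) = #{j | z j < z i} := by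
    rw [sum_boole, filter_filter]
    simp only [and_iff_right_of_imp ne_of_lt]
  have hsum : Tendsto (fun γ => ∑ j with z j ≠ z i, inclusionProb n z γ j) atTop
      (𝓝 #{j | z j < z i}) := by
    rw [← hcount]
    exact tendsto_finsetSum _ fun j hj =>
      tendsto_inclusionProb_of_ne hlt hle (mem_filter.1 hj).2
  simp_rw [fun γ => eq_div_of_mul_eq hpos
    (inclusionProb_mul_card_eq (hle.trans (card_le_univ _)) z γ i)]
  exact (hsum.const_sub _).div_const _

end InclusionProbability

section OrderStatistics

theorem card_filter_univ_comp_equiv {α β : Type*} [Fintype α] [Fintype β] (e : α ≃ β)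
    (p : β → Prop) [DecidablePred p] : #{a | p (e a)} = #{b | p b} :=
  card_equiv e fun a => by simp only [mem_filter, mem_univ, true_and]

variable {d q : ℕ}

theorem sort_map_univ_eq_ofFn {α : Type*} [LinearOrder α] (z : Fin d → α) :
    (univ.val.map z).sort (· ≤ ·) = List.ofFn (z ∘ Tuple.sort z) := by
  refine List.Perm.eq_of_pairwise' (Multiset.pairwise_sort _ _)
    (Tuple.monotone_sort z).sortedLE_ofFn.pairwise (Multiset.coe_eq_coe.1 ?_)
  rw [Multiset.sort_eq, Fin.univ_val_map]
  exact Multiset.coe_eq_coe.2 ((Tuple.sort z).ofFn_comp_perm z).symm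

theorem kthLargest_eq_apply_sort (z : Fin d → ℝ) (hq : 0 < q) (hqd : q ≤ d) :
    kthLargest z q = z (Tuple.sort z ⟨d - q, by omega⟩) := by
  rw [kthLargest, sort_map_univ_eq_ofFn, List.getD_eq_getElem _ _ (by simp; omega),
    List.getElem_ofFn, Function.comp_apply]

theorem kthLargest_lt_iff (z : Fin d → ℝ) (hq : 0 < q) (hqd : q ≤ d) {a : ℝ} :
    kthLargest z q < a ↔ d - q < #{j | z j < a} := by
  rw [kthLargest_eq_apply_sort z hq hqd, ← card_filter_univ_comp_equiv (Tuple.sort z) (z · < a)]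
  exact (Tuple.lt_card_lt_iff_apply_lt_of_monotone (Tuple.monotone_sort z)).symm

theorem kthLargest_le_iff (z : Fin d → ℝ) (hq : 0 < q) (hqd : q ≤ d) {a : ℝ} :
    kthLargest z q ≤ a ↔ d - q < #{j | z j ≤ a} := by
  rw [kthLargest_eq_apply_sort z hq hqd, ← card_filter_univ_comp_equiv (Tuple.sort z) (z · ≤ a)]
  exact (Tuple.lt_card_le_iff_apply_le_of_monotone (Tuple.monotone_sort z)).symm

end OrderStatistics

theorem wGSM_eq_inclusionProb {d : ℕ} (k : ℕ) (γ : ℝ) (x : Fin d → ℝ) (i : Fin d) :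
    wGSM k γ x i = inclusionProb (d - k) (fun j => |x j|) γ i :=
  rfl

/-- Limit of the weight vector w_{k,γ}(x) as γ → ∞: with
Λ_a = {i : |x i| < |x|₍k₎} and Λ_b = {i : |x i| = |x|₍k₎}, the i-th weight tends
to 1 on Λ_a, to (d − k − |Λ_a|)/|Λ_b| on Λ_b, and to 0 elsewhere. In
particular, if |x|₍k₎ > |x|₍k₊₁₎, the weights tend to the 0/1 vector that is 0
exactly on the index set of the k largest-magnitude entries of x. -/
theorem stmt8 {d : ℕ} (k : ℕ) (hk : 0 < k) (hkd : k < d) (x : Fin d → ℝ) :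
    (∀ i : Fin d,
      Tendsto (fun γ : ℝ => wGSM k γ x i) atTop (nhds
        (if |x i| < kthLargest (fun j => |x j|) k then 1
         else if |x i| = kthLargest (fun j => |x j|) k then
           ((d : ℝ) - (k : ℝ) -
              (Set.ncard {j : Fin d | |x j| < kthLargest (fun j => |x j|) k} : ℝ)) /
             (Set.ncard {j : Fin d | |x j| = kthLargest (fun j => |x j|) k} : ℝ)
         else 0))) ∧
    (kthLargest (fun j => |x j|) (k + 1) < kthLargest (fun j => |x j|) k →
      ∀ i : Fin d,
        Tendsto (fun γ : ℝ => wGSM k γ x i) atTop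
          (nhds (if kthLargest (fun j => |x j|) k ≤ |x i| then 0 else 1))) := by
  have hncard (p : Fin d → Prop) [DecidablePred p] : Set.ncard {j | p j} = #{j | p j} := by
    rw [← Set.ncard_coe_finset, coe_filter_univ]
  simp_rw [wGSM_eq_inclusionProb, hncard, ← Nat.cast_sub hkd.le]
  set z : Fin d → ℝ := fun j => |x j|
  have hcard : d - k ≤ Fintype.card (Fin d) := by simp
  have tendsto_one {i : Fin d} (hi : z i < kthLargest z k) :
      Tendsto (fun γ => inclusionProb (d - k) z γ i) atTop (𝓝 1) :=
    tendsto_inclusionProb_one hcard (not_lt.1 (mt (kthLargest_le_iff z hk hkd.le).2 hi.not_ge))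
  refine ⟨fun i => ?_, fun hgap i => ?_⟩
  · split_ifs with hlt heq
    · exact tendsto_one hlt
    · rw [← heq]
      exact tendsto_inclusionProb_of_card_le
        (not_lt.1 (mt (kthLargest_lt_iff z hk hkd.le).2 heq.not_gt))
        ((kthLargest_le_iff z hk hkd.le).1 heq.ge).le
    · have hgt : kthLargest z k < z i := lt_of_le_of_ne (not_lt.1 hlt) (Ne.symm heq)
      exact tendsto_inclusionProb_zero ((kthLargest_lt_iff z hk hkd.le).1 hgt).le
  · split_ifs with hle
    · have hlt : d - (k + 1) < #{j | z j < z i} :=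
        (kthLargest_lt_iff z k.succ_pos hkd).1 (hgap.trans_le hle)
      exact tendsto_inclusionProb_zero (by omega)
    · exact tendsto_one (not_le.1 hle)
end

section
/- Suppose the n × d matrix A has rank n, so σ_n(A) > 0. Let w ∈ [0,1]^d with Σ_{i=1}^d w_i = d − k, let 0 < λ < σ_n(A)/√(d−k), and let x* be a global minimizer over ℝ^d of the convex function F(x) = ‖Ax − y‖₂ + λ Σ_{i=1}^d w_i |x_i|. Then A x* = y. -/
open Finset Filter Topology

/-- The n-th (smallest) singular value of an n × d matrix A (n ≤ d):
the infimum of ‖Aᵀu‖₂ over unit vectors u ∈ ℝⁿ. -/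
noncomputable def sigmaN {n d : ℕ} (A : Matrix (Fin n) (Fin d) ℝ) : ℝ :=
  sInf {r : ℝ | ∃ u : Fin n → ℝ, l2norm u = 1 ∧ r = l2norm (Matrix.vecMul u A)}

/-!
When `σₙ(A) > 0`, the residual `r = A x* - y` has a preimage `h = Aᵀ(AAᵀ)⁻¹ r` with
`σₙ(A) ‖h‖ ≤ ‖r‖`. The competitor `x* - h` has zero residual, and it raises a penalty with
Lipschitz constant `L` by at most `L ‖h‖ ≤ (L / σₙ(A)) ‖r‖`. If `L < σₙ(A)`, minimality of `x*`
forces `r = 0`. For weights in `[0, 1]`, Cauchy–Schwarz gives the weighted `ℓ₁` penalty the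
Lipschitz constant `λ ‖w‖₂ ≤ λ √(∑ wᵢ)`.
-/

open WithLp InnerProductSpace
open scoped NNReal

theorem eq_of_forall_dist_add_le {X Y : Type*} [PseudoMetricSpace X] [MetricSpace Y]
    {f : X → Y} {P : X → ℝ} {L : ℝ≥0} {σ : ℝ} {x z : X} {y : Y} (hP : LipschitzWith L P)
    (hL : L < σ) (hmin : ∀ x', dist (f x) y + P x ≤ dist (f x') y + P x')
    (hz : f z = y) (hxz : σ * dist x z ≤ dist (f x) y) : f x = y := by
  have hPz : P z ≤ P x + L * dist x z := by
    rw [dist_comm]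
    exact LipschitzWith.le_add_mul hP z x
  have hres : dist (f x) y ≤ L * dist x z := by
    have hz_min := hmin z
    rw [hz, dist_self] at hz_min
    linarith
  have hdist : dist x z = 0 :=
    le_antisymm (nonpos_of_mul_nonpos_right (by linarith) (sub_pos.2 hL)) dist_nonneg
  rw [hdist, mul_zero] at hres
  exact dist_le_zero.1 hres

section Adjoint

variable {𝕜 E F : Type*} [RCLike 𝕜]
  [NormedAddCommGroup E] [InnerProductSpace 𝕜 E] [CompleteSpace E]
  [NormedAddCommGroup F] [InnerProductSpace 𝕜 F] [CompleteSpace F]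
  {T : E →L[𝕜] F} {σ : ℝ}

theorem norm_adjoint_apply_sq (T : E →L[𝕜] F) (u : F) :
    ‖T.adjoint u‖ ^ 2 = ‖⟪T (T.adjoint u), u⟫_𝕜‖ := by
  rw [← ContinuousLinearMap.adjoint_inner_right, inner_self_eq_norm_sq_to_K, norm_pow,
    RCLike.norm_ofReal, sq_abs]

theorem isUnit_comp_adjoint_of_mul_norm_le_norm_adjoint (hσ : 0 < σ)
    (hT : ∀ u, σ * ‖u‖ ≤ ‖T.adjoint u‖) : IsUnit (T ∘L T.adjoint) := by
  refine ContinuousLinearMap.isUnit_of_forall_le_norm_inner_map _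
    (c := ⟨σ ^ 2, sq_nonneg σ⟩) (pow_pos hσ 2) fun u => ?_
  calc ‖u‖ ^ 2 * σ ^ 2 = (σ * ‖u‖) ^ 2 := by ring
    _ ≤ ‖T.adjoint u‖ ^ 2 := by gcongr; exact hT u
    _ = ‖⟪(T ∘L T.adjoint) u, u⟫_𝕜‖ := norm_adjoint_apply_sq T u

theorem exists_apply_eq_of_mul_norm_le_norm_adjoint (hσ : 0 < σ)
    (hT : ∀ u, σ * ‖u‖ ≤ ‖T.adjoint u‖) (r : F) : ∃ h, T h = r ∧ σ * ‖h‖ ≤ ‖r‖ := by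
  obtain ⟨u, hu⟩ := (ContinuousLinearMap.isUnit_iff_bijective.1
    (isUnit_comp_adjoint_of_mul_norm_le_norm_adjoint hσ hT)).surjective r
  refine ⟨T.adjoint u, hu, ?_⟩
  have hsq : ‖T.adjoint u‖ ^ 2 ≤ ‖r‖ * ‖u‖ := by
    rw [norm_adjoint_apply_sq, ← ContinuousLinearMap.comp_apply, hu]
    exact norm_inner_le_norm r u
  rcases (norm_nonneg (T.adjoint u)).eq_or_lt with h0 | hpos
  · rw [← h0, mul_zero]
    exact norm_nonneg r
  · refine le_of_mul_le_mul_right ?_ hpos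
    calc σ * ‖T.adjoint u‖ * ‖T.adjoint u‖ = σ * ‖T.adjoint u‖ ^ 2 := by ring
      _ ≤ σ * (‖r‖ * ‖u‖) := by gcongr
      _ = ‖r‖ * (σ * ‖u‖) := by ring
      _ ≤ ‖r‖ * ‖T.adjoint u‖ := by gcongr; exact hT u

theorem apply_eq_of_forall_norm_sub_add_le {P : E → ℝ} {L : ℝ≥0} {x : E} {y : F}
    (hT : ∀ u, σ * ‖u‖ ≤ ‖T.adjoint u‖) (hP : LipschitzWith L P) (hL : L < σ)
    (hmin : ∀ x', ‖T x - y‖ + P x ≤ ‖T x' - y‖ + P x') : T x = y := by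
  obtain ⟨h, hTh, hh⟩ :=
    exists_apply_eq_of_mul_norm_le_norm_adjoint (L.coe_nonneg.trans_lt hL) hT (T x - y)
  refine eq_of_forall_dist_add_le (z := x - h) hP hL ?_ ?_ ?_
  · simpa only [dist_eq_norm] using hmin
  · rw [map_sub, hTh, sub_sub_cancel]
  · rwa [dist_self_sub_right, dist_eq_norm]

end Adjoint

section WeightedPenalty

variable {ι : Type*} [Fintype ι] {w : ι → ℝ}

theorem norm_toLp_le_sqrt_sum (hw : ∀ i, w i ∈ Set.Icc (0 : ℝ) 1) :
    ‖toLp 2 w‖ ≤ √(∑ i, w i) := by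
  rw [EuclideanSpace.norm_eq]
  refine Real.sqrt_le_sqrt (sum_le_sum fun i _ => ?_)
  rw [Real.norm_eq_abs, sq_abs]
  exact pow_le_of_le_one (hw i).1 (hw i).2 two_ne_zero

theorem lipschitzWith_sum_mul_abs (w : ι → ℝ) :
    LipschitzWith ‖toLp 2 w‖₊ fun x : EuclideanSpace ℝ ι => ∑ i, w i * |x i| := by
  refine LipschitzWith.of_le_add_mul _ fun x z => ?_
  have habs (i : ι) : w i * |x i| - w i * |z i| ≤ |w i| * |x i - z i| := by
    calc w i * |x i| - w i * |z i| = w i * (|x i| - |z i|) := (mul_sub ..).symm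
      _ ≤ |w i| * |(|x i| - |z i|)| := (le_abs_self _).trans_eq (abs_mul _ _)
      _ ≤ |w i| * |x i - z i| :=
        mul_le_mul_of_nonneg_left (abs_abs_sub_abs_le (x i) (z i)) (abs_nonneg _)
  rw [← sub_le_iff_le_add', ← sum_sub_distrib]
  calc ∑ i, (w i * |x i| - w i * |z i|) ≤ ∑ i, |w i| * |x i - z i| :=
        sum_le_sum fun i _ => habs i
    _ ≤ √(∑ i, |w i| ^ 2) * √(∑ i, |x i - z i| ^ 2) := Real.sum_mul_le_sqrt_mul_sqrt _ _ _
    _ = ‖toLp 2 w‖ * dist x z := by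
      simp only [EuclideanSpace.norm_eq, EuclideanSpace.dist_eq, Real.norm_eq_abs, Real.dist_eq]

theorem lipschitzWith_mul_sum_mul_abs {c : ℝ} (hc : 0 ≤ c) (hw : ∀ i, w i ∈ Set.Icc (0 : ℝ) 1) :
    LipschitzWith (c * √(∑ i, w i)).toNNReal
      fun x : EuclideanSpace ℝ ι => c * ∑ i, w i * |x i| := by
  refine ((lipschitzWith_smul c).comp (lipschitzWith_sum_mul_abs w)).weaken
    (NNReal.le_toNNReal_of_coe_le ?_)
  rw [NNReal.coe_mul, coe_nnnorm, coe_nnnorm, Real.norm_of_nonneg hc]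
  exact mul_le_mul_of_nonneg_left (norm_toLp_le_sqrt_sum hw) hc

end WeightedPenalty

theorem l2norm_eq_norm_toLp {m : ℕ} (v : Fin m → ℝ) : l2norm v = ‖toLp 2 v‖ := by
  simp only [l2norm, EuclideanSpace.norm_eq, Real.norm_eq_abs, sq_abs]

theorem sigmaN_mul_norm_le {n d : ℕ} (A : Matrix (Fin n) (Fin d) ℝ)
    (u : EuclideanSpace ℝ (Fin n)) : sigmaN A * ‖u‖ ≤ ‖toLp 2 (Matrix.vecMul u A)‖ := by
  rcases eq_or_ne u 0 with rfl | hu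
  · simp
  have hu' : 0 < ‖u‖ := norm_pos_iff.2 hu
  have hle : sigmaN A ≤ ‖toLp 2 (Matrix.vecMul (‖u‖⁻¹ • u) A)‖ := by
    refine csInf_le ⟨0, ?_⟩ ⟨(‖u‖⁻¹ • u).ofLp, ?_, (l2norm_eq_norm_toLp _).symm⟩
    · rintro _ ⟨v, -, rfl⟩
      exact Real.sqrt_nonneg _
    · rw [l2norm_eq_norm_toLp, toLp_ofLp, norm_smul, norm_inv, norm_norm,
        inv_mul_cancel₀ hu'.ne']
  rw [ofLp_smul, Matrix.smul_vecMul, toLp_smul, norm_smul, norm_inv, norm_norm] at hle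
  rwa [← le_div_iff₀ hu', div_eq_inv_mul]

theorem adjoint_toEuclideanLin_apply {m n : Type*} [Fintype m] [Fintype n] [DecidableEq n]
    (A : Matrix m n ℝ) (u : EuclideanSpace ℝ m) :
    A.toEuclideanLin.toContinuousLinearMap.adjoint u = toLp 2 (Matrix.vecMul u A) := by
  classical
  rw [← LinearMap.adjoint_toContinuousLinearMap, LinearMap.coe_toContinuousLinearMap',
    ← Matrix.toEuclideanLin_conjTranspose_eq_adjoint, Matrix.toLpLin_apply,
    Matrix.conjTranspose_eq_transpose_of_trivial, Matrix.mulVec_transpose]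

theorem stmt14_general {n d : ℕ} (A : Matrix (Fin n) (Fin d) ℝ) (y : Fin n → ℝ)
    {P : EuclideanSpace ℝ (Fin d) → ℝ} {L : ℝ≥0} (hP : LipschitzWith L P) (hL : L < sigmaN A)
    (xstar : Fin d → ℝ)
    (hmin : ∀ x : Fin d → ℝ,
      l2norm (A.mulVec xstar - y) + P (toLp 2 xstar) ≤ l2norm (A.mulVec x - y) + P (toLp 2 x)) :
    A.mulVec xstar = y := by
  have hT (u : EuclideanSpace ℝ (Fin n)) :
      sigmaN A * ‖u‖ ≤ ‖A.toEuclideanLin.toContinuousLinearMap.adjoint u‖ := by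
    rw [adjoint_toEuclideanLin_apply]
    exact sigmaN_mul_norm_le A u
  refine toLp_injective 2 (apply_eq_of_forall_norm_sub_add_le (x := toLp 2 xstar) hT hP hL ?_)
  intro x
  have hx := hmin x.ofLp
  rw [l2norm_eq_norm_toLp, l2norm_eq_norm_toLp] at hx
  exact hx

/-- If A has rank n, w ∈ [0,1]^d with Σ wᵢ = d − k, and
0 < λ < σₙ(A)/√(d−k), then every global minimizer x* of
F(x) = ‖Ax − y‖₂ + λ Σᵢ wᵢ |xᵢ| satisfies A x* = y. -/
theorem stmt14 {n d : ℕ} (k : ℕ) (hk : 0 < k) (hkd : k < d) (hnd : n ≤ d)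
    (A : Matrix (Fin n) (Fin d) ℝ) (hrank : A.rank = n) (y : Fin n → ℝ)
    (w : Fin d → ℝ) (hw : ∀ i, w i ∈ Set.Icc (0 : ℝ) 1)
    (hwsum : ∑ i, w i = (d : ℝ) - (k : ℝ))
    (lam : ℝ) (hlam0 : 0 < lam) (hlam : lam < sigmaN A / Real.sqrt ((d : ℝ) - (k : ℝ)))
    (xstar : Fin d → ℝ)
    (hmin : ∀ x : Fin d → ℝ,
      l2norm (A.mulVec xstar - y) + lam * ∑ i, w i * |xstar i| ≤
      l2norm (A.mulVec x - y) + lam * ∑ i, w i * |x i|) :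
    A.mulVec xstar = y := by
  have hs : 0 < √((d : ℝ) - k) := Real.sqrt_pos.2 (sub_pos.2 (mod_cast hkd))
  exact stmt14_general A y (lipschitzWith_mul_sum_mul_abs hlam0.le hw)
    (by rwa [Real.coe_toNNReal _ (by positivity), hwsum, ← lt_div_iff₀ hs]) xstar hmin
end

section
/- Let z ∈ ℝ^d, let γ ∈ (0,∞), and let i ∈ {1,…,d}. Define s_{0,γ}(z) = 1 and, for 1 ≤ q ≤ d, s_{q,γ}(z) = Σ_{Λ⊆{1,…,d}, |Λ|=q} exp( γ ( Σ_{j∈Λ} z_j − Σ_{j=1}^q z_(j) ) ), and define c_{q,γ}^i(z) = exp(γ (z_i − z_(q))) · s_{q−1,γ}(z) / s_{q,γ}(z) for q = 1,…,d. Then q ↦ c_{q,γ}^i(z) is strictly increasing on {1,…,d}. -/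
open Finset Filter Topology

/-- s_{q,γ}(z) = Σ_{|Λ|=q} exp(γ (Σ_{j∈Λ} z_j − Σ_{j=1}^q z₍j₎)); for q = 0 the
only Λ is ∅ and the value is 1. -/
noncomputable def sGSM {d : ℕ} (γ : ℝ) (z : Fin d → ℝ) (q : ℕ) : ℝ :=
  ∑ Λ ∈ Finset.univ.powersetCard q,
    Real.exp (γ * ((∑ j ∈ Λ, z j) - ∑ j ∈ Finset.range q, kthLargest z (j + 1)))

/-!
Up to the factor `exp (γ * z i)`, the quantity `c_{q,γ}^i(z)` is the ratio `e_{q-1} / e_q` of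
elementary symmetric functions of the weights `exp (γ * z j)`, because the order statistics
cancel. These ratios increase strictly since `e_i e_{j+2} < e_{i+1} e_{j+1}` for `i ≤ j`: upon
adjoining a weight `x`, the difference of the two sides is a quadratic polynomial in `x` whose
coefficients are nonnegative by induction, and the leading one is positive.
-/

section Semiring

variable {R : Type*} [CommSemiring R]

lemma multiset_esymm_zero (s : Multiset R) : s.esymm 0 = 1 := by
  simp [Multiset.esymm]

lemma multiset_esymm_eq_zero_of_card_lt {s : Multiset R} {k : ℕ} (hk : s.card < k) :
    s.esymm k = 0 := by
  simp [Multiset.esymm, Multiset.powersetCard_eq_empty k hk]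

lemma multiset_esymm_cons_succ (x : R) (s : Multiset R) (k : ℕ) :
    (x ::ₘ s).esymm (k + 1) = s.esymm (k + 1) + x * s.esymm k := by
  simp [Multiset.esymm, Multiset.powersetCard_cons, Multiset.sum_map_mul_left]

variable [PartialOrder R]

lemma multiset_esymm_nonneg [IsOrderedRing R] {s : Multiset R} (hs : ∀ x ∈ s, 0 ≤ x) (k : ℕ) :
    0 ≤ s.esymm k := by
  refine Multiset.sum_nonneg (Multiset.forall_mem_map_iff.2 fun t ht ↦ ?_)
  have hts : t ≤ s := (Multiset.mem_powersetCard.1 ht).1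
  exact Multiset.prod_nonneg fun x hx ↦ hs x (Multiset.mem_of_le hts hx)

lemma multiset_esymm_pos [IsStrictOrderedRing R] {s : Multiset R} (hs : ∀ x ∈ s, 0 < x) {k : ℕ}
    (hk : k ≤ s.card) : 0 < s.esymm k := by
  induction s using Multiset.induction_on generalizing k with
  | empty => simp_all [multiset_esymm_zero]
  | cons x s ih =>
    obtain ⟨hx, hs⟩ := Multiset.forall_mem_cons.1 hs
    cases k with
    | zero => simp [multiset_esymm_zero]
    | succ k =>
      rw [multiset_esymm_cons_succ]
      have hk : k ≤ s.card := by simpa using hk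
      exact add_pos_of_nonneg_of_pos (multiset_esymm_nonneg (fun y hy ↦ (hs y hy).le) _)
        (mul_pos hx (ih hs hk))

end Semiring

lemma multiset_esymm_mul_esymm_add_two_lt {R : Type*} [CommRing R] [LinearOrder R]
    [IsStrictOrderedRing R] {s : Multiset R} (hs : ∀ x ∈ s, 0 < x) {i j : ℕ} (hij : i ≤ j)
    (hj : j < s.card) :
    s.esymm i * s.esymm (j + 2) < s.esymm (i + 1) * s.esymm (j + 1) := by
  induction s using Multiset.induction_on generalizing i j with
  | empty => simp at hj
  | cons x s ih =>
    obtain ⟨hx, hs⟩ := Multiset.forall_mem_cons.1 hs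
    have hj : j ≤ s.card := by simpa [Nat.lt_succ_iff] using hj
    have nonneg (k : ℕ) : 0 ≤ s.esymm k := multiset_esymm_nonneg (fun y hy ↦ (hs y hy).le) k
    have log_concave {k l : ℕ} (hkl : k ≤ l) :
        s.esymm k * s.esymm (l + 2) ≤ s.esymm (k + 1) * s.esymm (l + 1) := by
      rcases lt_or_ge l s.card with hl | hl
      · exact (ih hs hkl hl).le
      · rw [multiset_esymm_eq_zero_of_card_lt (by lia : s.card < l + 2), mul_zero]
        exact mul_nonneg (nonneg _) (nonneg _)
    rcases i with _ | i
    · have h_const := log_concave (Nat.zero_le j)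
      have h_linear : 0 ≤ x * (s.esymm 1 * s.esymm j) :=
        mul_nonneg hx.le (mul_nonneg (nonneg _) (nonneg _))
      have h_quadratic : 0 < x ^ 2 * s.esymm j :=
        mul_pos (pow_pos hx 2) (multiset_esymm_pos hs hj)
      simp only [multiset_esymm_cons_succ, multiset_esymm_zero, zero_add] at h_const ⊢
      linear_combination h_const + h_linear + h_quadratic
    · obtain ⟨j, rfl⟩ := Nat.exists_eq_add_of_le' (i.succ_pos.trans_le hij)
      have hij : i ≤ j := by simpa using hij
      have h_const := log_concave (Nat.succ_le_succ hij)
      have h_linear : s.esymm i * s.esymm (j + 3) ≤ s.esymm (i + 2) * s.esymm (j + 1) := by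
        rcases hij.eq_or_lt with rfl | hij'
        · simpa only [mul_comm] using log_concave i.le_succ
        · exact (log_concave (hij.trans j.le_succ)).trans (log_concave hij')
      have h_quadratic := ih hs hij hj
      simp only [multiset_esymm_cons_succ]
      linear_combination h_const + x * h_linear + x ^ 2 * h_quadratic

lemma strictMonoOn_multiset_esymm_div_esymm_succ {K : Type*} [Field K] [LinearOrder K]
    [IsStrictOrderedRing K] {s : Multiset K} (hs : ∀ x ∈ s, 0 < x) :
    StrictMonoOn (fun k ↦ s.esymm k / s.esymm (k + 1)) (Set.Iio s.card) := by
  intro i hi j hj hij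
  obtain ⟨j, rfl⟩ := Nat.exists_eq_add_of_le' (i.zero_le.trans_lt hij)
  rw [div_lt_div_iff₀ (multiset_esymm_pos hs hi) (multiset_esymm_pos hs hj),
    mul_comm (s.esymm (j + 1))]
  exact multiset_esymm_mul_esymm_add_two_lt hs (Nat.le_of_lt_succ hij) (j.lt_succ_self.trans hj)

/-- The weights `exp (γ * z j)`, whose elementary symmetric functions are the sums `s_{q,γ}(z)`
without the normalization by the order statistics of `z`. -/
noncomputable def expWeights {d : ℕ} (γ : ℝ) (z : Fin d → ℝ) : Multiset ℝ :=
  univ.val.map fun j ↦ Real.exp (γ * z j)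

section GSM

variable {d : ℕ} (γ : ℝ) (z : Fin d → ℝ)

lemma card_expWeights : (expWeights γ z).card = d := by
  simp [expWeights]

lemma pos_of_mem_expWeights : ∀ x ∈ expWeights γ z, 0 < x :=
  Multiset.forall_mem_map_iff.2 fun _ _ ↦ Real.exp_pos _

lemma sGSM_eq_esymm_expWeights_div (q : ℕ) :
    sGSM γ z q =
      (expWeights γ z).esymm q / Real.exp (γ * ∑ j ∈ range q, kthLargest z (j + 1)) := by
  simp only [sGSM, expWeights, Finset.esymm_map_val, sum_div, mul_sub, Real.exp_sub, mul_sum,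
    Real.exp_sum]

lemma exp_mul_sGSM_div_sGSM_succ (i : Fin d) (q : ℕ) :
    Real.exp (γ * (z i - kthLargest z (q + 1))) * sGSM γ z q / sGSM γ z (q + 1) =
      Real.exp (γ * z i) * ((expWeights γ z).esymm q / (expWeights γ z).esymm (q + 1)) := by
  simp only [sGSM_eq_esymm_expWeights_div, sum_range_succ, mul_add, mul_sub, Real.exp_add,
    Real.exp_sub]
  field_simp

theorem stmt19_general (i : Fin d) :
    StrictMonoOn
      (fun q ↦ Real.exp (γ * (z i - kthLargest z q)) * sGSM γ z (q - 1) / sGSM γ z q)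
      (Set.Icc 1 d) := by
  rintro p ⟨hp, hpd⟩ q ⟨hq, hqd⟩ hpq
  obtain ⟨p, rfl⟩ := Nat.exists_eq_add_of_le' hp
  obtain ⟨q, rfl⟩ := Nat.exists_eq_add_of_le' hq
  have ratio_lt := strictMonoOn_multiset_esymm_div_esymm_succ (pos_of_mem_expWeights γ z)
    (by simpa [card_expWeights] using hpd) (by simpa [card_expWeights] using hqd)
    (Nat.lt_of_succ_lt_succ hpq)
  simpa only [Nat.add_sub_cancel, exp_mul_sGSM_div_sGSM_succ] using
    mul_lt_mul_of_pos_left ratio_lt (Real.exp_pos (γ * z i))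

end GSM

/-- The quantities c_{q,γ}ⁱ(z) = exp(γ(zᵢ − z₍q₎)) s_{q−1,γ}(z)/s_{q,γ}(z) are
strictly increasing in q on {1,…,d}. -/
theorem stmt19 {d : ℕ} (hd : 1 ≤ d) (z : Fin d → ℝ) (γ : ℝ) (hγ : 0 < γ)
    (i : Fin d) :
    ∀ q : ℕ, 1 ≤ q → q + 1 ≤ d →
      Real.exp (γ * (z i - kthLargest z q)) * sGSM γ z (q - 1) / sGSM γ z q <
      Real.exp (γ * (z i - kthLargest z (q + 1))) * sGSM γ z q / sGSM γ z (q + 1) :=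
  fun q hq hqd ↦ stmt19_general γ z i ⟨hq, q.le_succ.trans hqd⟩ ⟨hq.trans q.le_succ, hqd⟩
    q.lt_succ_self
end
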